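/- Transformation of the total free energy (Corollary, integral form): Let ω ⊆ ℝ² be a bounded open set, let ψ_A, ψ_B : ℝ² → ℝ³ be twice continuously differentiable on an open neighborhood of the closure of ω with ∂₁ψ_A × ∂₂ψ_A ≠ 0 on the closure of ω, suppose (∇ψ_B(y))ᵀ∇ψ_B(y) = (∇ψ_A(y))ᵀ∇ψ_A(y) for all y ∈ ω, and let f : ω → ℝ³ be integrable and α > 0. Then, writing g_A = g[ψ_A], II_A = II[ψ_A], II_B = II[ψ_B] pointwise on ω, (α/2)∫_ω √(det g_A) |g_A^{-1/2}(II_B − II_A) g_A^{-1/2}|² dx − ∫_ω √(det g_A) f·ψ_B dx = (α/2)∫_ω √(det g_A) ( Σ_{m=1}^{3}|g_A^{-1/2} D²ψ_Bᵐ g_A^{-1/2}|² − 2 II_B : (g_A⁻¹ II_A g_A⁻¹) ) dx − ∫_ω √(det g_A) f·ψ_B dx + (α/2)∫_ω √(det g_A) C_A dx, where C_A(x) = 2 |g_A^{-1/2} II_A g_A^{-1/2}|²(x) − Σ_{m=1}^{3} |g_A^{-1/2} D²ψ_Aᵐ(x) g_A^{-1/2}|² depends only on ψ_A. -/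

import Mathlib

open Matrix MeasureTheory

noncomputable section

/-- `i`-th partial derivative of `ψ : ℝ² → ℝ³` at `x`. -/
def pd (ψ : (Fin 2 → ℝ) → (Fin 3 → ℝ)) (i : Fin 2) (x : Fin 2 → ℝ) : Fin 3 → ℝ :=
  fderiv ℝ ψ x (Pi.single i 1)

/-- Jacobian matrix `∇ψ(x) ∈ ℝ^{3×2}`. -/
def jac (ψ : (Fin 2 → ℝ) → (Fin 3 → ℝ)) (x : Fin 2 → ℝ) : Matrix (Fin 3) (Fin 2) ℝ :=
  Matrix.of fun m i => pd ψ i x m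

/-- First fundamental form `g[ψ](x) = (∇ψ(x))ᵀ ∇ψ(x)`. -/
def met (ψ : (Fin 2 → ℝ) → (Fin 3 → ℝ)) (x : Fin 2 → ℝ) : Matrix (Fin 2) (Fin 2) ℝ :=
  (jac ψ x)ᵀ * jac ψ x

/-- Euclidean inner product on `ℝ³`. -/
def dot3 (u v : Fin 3 → ℝ) : ℝ := ∑ m, u m * v m

/-- Euclidean norm on `ℝ³`. -/
def norm3 (u : Fin 3 → ℝ) : ℝ := Real.sqrt (dot3 u u)

/-- Cross product `∂₁ψ(x) × ∂₂ψ(x)`. -/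
def crossPsi (ψ : (Fin 2 → ℝ) → (Fin 3 → ℝ)) (x : Fin 2 → ℝ) : Fin 3 → ℝ :=
  crossProduct (pd ψ 0 x) (pd ψ 1 x)

/-- Unit normal `n[ψ](x)`. -/
def nrm (ψ : (Fin 2 → ℝ) → (Fin 3 → ℝ)) (x : Fin 2 → ℝ) : Fin 3 → ℝ :=
  (norm3 (crossPsi ψ x))⁻¹ • crossPsi ψ x

/-- Second partial derivative `∂ᵢ∂ⱼψ(x)`. -/
def pd2 (ψ : (Fin 2 → ℝ) → (Fin 3 → ℝ)) (i j : Fin 2) (x : Fin 2 → ℝ) : Fin 3 → ℝ :=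
  pd (pd ψ j) i x

/-- Hessian `D²ψᵐ(x)` of the `m`-th component. -/
def hess (ψ : (Fin 2 → ℝ) → (Fin 3 → ℝ)) (m : Fin 3) (x : Fin 2 → ℝ) :
    Matrix (Fin 2) (Fin 2) ℝ :=
  Matrix.of fun i j => pd2 ψ i j x m

/-- Second fundamental form `II[ψ](x)ᵢⱼ = ∂ᵢ∂ⱼψ(x)·n[ψ](x)`. -/
def sff (ψ : (Fin 2 → ℝ) → (Fin 3 → ℝ)) (x : Fin 2 → ℝ) : Matrix (Fin 2) (Fin 2) ℝ :=
  Matrix.of fun i j => dot3 (pd2 ψ i j x) (nrm ψ x)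

/-- Frobenius inner product `A : B`. -/
def frob {n : Type*} [Fintype n] (A B : Matrix n n ℝ) : ℝ := ∑ i, ∑ j, A i j * B i j

/-- Gram–Schmidt frame vector `y¹[ψ](x)`. -/
def y1 (ψ : (Fin 2 → ℝ) → (Fin 3 → ℝ)) (x : Fin 2 → ℝ) : Fin 3 → ℝ :=
  (norm3 (pd ψ 0 x))⁻¹ • pd ψ 0 x

/-- Gram–Schmidt vector `ŷ²[ψ](x)` (before normalization). -/
def yhat2 (ψ : (Fin 2 → ℝ) → (Fin 3 → ℝ)) (x : Fin 2 → ℝ) : Fin 3 → ℝ :=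
  pd ψ 1 x - (dot3 (pd ψ 1 x) (y1 ψ x)) • y1 ψ x

/-- Gram–Schmidt frame vector `y²[ψ](x)`. -/
def y2 (ψ : (Fin 2 → ℝ) → (Fin 3 → ℝ)) (x : Fin 2 → ℝ) : Fin 3 → ℝ :=
  (norm3 (yhat2 ψ x))⁻¹ • yhat2 ψ x

/-!
On `ω` the two immersions have the same metric `g`, hence, by the Koszul formula, the same
Christoffel symbols of the first kind `Γ_{ij,k} = ∂ᵢ∂ⱼψ · ∂ₖψ`. Splitting `∂ᵢ∂ⱼψ` into its
tangential and normal parts gives the Gauss formula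
`∂ᵢ∂ⱼψ · ∂ₖ∂ₗψ = II_ij II_kl + g^{ab} Γ_{ij,a} Γ_{kl,b}`, so the difference
`∑ₘ |g^{-1/2} D²ψᵐ g^{-1/2}|² - |g^{-1/2} II g^{-1/2}|²` is intrinsic: it agrees for `ψ_A` and
`ψ_B`. Expanding `|g^{-1/2} (II_B - II_A) g^{-1/2}|²` and exchanging `|g^{-1/2} II_B g^{-1/2}|²` by
means of this equality gives the identity of the energy densities. It may be integrated termwise:
by `|S⁻¹ M S⁻¹|² = M : (g⁻¹ M g⁻¹)` for `S² = g`, the densities are continuous in `g`, up to the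
compact set `closure ω`, without any regularity of the field of square roots `S`.
-/

open Filter Topology

section Frobenius

variable {n : Type*} [Fintype n]

lemma frob_eq_trace (A B : Matrix n n ℝ) : frob A B = (Aᵀ * B).trace := by
  simp only [frob, Matrix.trace, Matrix.diag_apply, Matrix.mul_apply, Matrix.transpose_apply]
  exact Finset.sum_comm

lemma frob_sub_sub_self (A B : Matrix n n ℝ) :
    frob (A - B) (A - B) = frob A A - 2 * frob A B + frob B B := by
  simp only [frob, Matrix.sub_apply, Finset.mul_sum, ← Finset.sum_sub_distrib,
    ← Finset.sum_add_distrib]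
  exact Finset.sum_congr rfl fun i _ => Finset.sum_congr rfl fun j _ => by ring

lemma frob_mul_mul (A P B Q : Matrix n n ℝ) :
    frob A (P * B * Q) = ∑ i, ∑ j, ∑ k, ∑ l, P i k * Q l j * (A i j * B k l) := by
  simp only [frob, Matrix.mul_apply, Finset.mul_sum, Finset.sum_mul]
  refine Finset.sum_congr rfl fun i _ => Finset.sum_congr rfl fun j _ => ?_
  rw [Finset.sum_comm]
  exact Finset.sum_congr rfl fun k _ => Finset.sum_congr rfl fun l _ => by ring

lemma frob_conj_conj {T : Matrix n n ℝ} (hT : T.IsSymm) (A B : Matrix n n ℝ) :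
    frob (T * A * T) (T * B * T) = frob A ((T * T) * B * (T * T)) := by
  simp only [frob_eq_trace, Matrix.transpose_mul, hT.eq]
  rw [Matrix.mul_assoc T, Matrix.mul_assoc T, Matrix.trace_mul_comm T]
  simp only [Matrix.mul_assoc]

lemma frob_conj_sqrt_inv [DecidableEq n] {S g : Matrix n n ℝ} (hS : S.IsSymm) (hSg : S * S = g)
    (A B : Matrix n n ℝ) :
    frob (S⁻¹ * A * S⁻¹) (S⁻¹ * B * S⁻¹) = frob A (g⁻¹ * B * g⁻¹) := by
  have hS_inv : S⁻¹.IsSymm := by rw [Matrix.IsSymm, Matrix.transpose_nonsing_inv, hS.eq]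
  rw [frob_conj_conj hS_inv, ← Matrix.mul_inv_rev, hSg]

lemma continuousOn_frob {X : Type*} [TopologicalSpace X] {A B : X → Matrix n n ℝ} {K : Set X}
    (hA : ContinuousOn A K) (hB : ContinuousOn B K) :
    ContinuousOn (fun y => frob (A y) (B y)) K := by
  have hentry {C : X → Matrix n n ℝ} (hC : ContinuousOn C K) (i j : n) :
      ContinuousOn (fun y => C y i j) K :=
    (continuous_apply_apply i j).comp_continuousOn hC
  exact continuousOn_finsetSum _ fun i _ => continuousOn_finsetSum _ fun j _ =>
    (hentry hA i j).mul (hentry hB i j)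

end Frobenius

section Integrability

variable {X n : Type*} [TopologicalSpace X] [MeasurableSpace X] [OpensMeasurableSpace X] [T2Space X]
  [Fintype n] [DecidableEq n] {μ : Measure X} [IsFiniteMeasureOnCompacts μ] {K s : Set X}
  {g S M N : X → Matrix n n ℝ}

lemma integrableOn_sqrt_det_mul_frob (hK : IsCompact K) (hg : ContinuousOn g K)
    (hdet : ∀ y ∈ K, (g y).det ≠ 0) (hM : ContinuousOn M K) (hN : ContinuousOn N K) :
    IntegrableOn (fun y => √(g y).det * frob (M y) ((g y)⁻¹ * N y * (g y)⁻¹)) K μ := by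
  have hsqrt : ContinuousOn (fun y => √(g y).det) K :=
    (continuous_id.matrix_det.comp_continuousOn hg).sqrt
  have hginv : ContinuousOn (fun y => (g y)⁻¹) K := fun y hy =>
    (continuousAt_matrix_inv (g y) (NormedRing.inverse_continuousAt
      (Units.mk0 _ (hdet y hy)))).comp_continuousWithinAt (hg y hy)
  exact (hsqrt.mul (continuousOn_frob hM ((hginv.mul hN).mul hginv))).integrableOn_compact hK

lemma integrableOn_sqrt_det_mul_frob_conj (hK : IsCompact K) (hs : MeasurableSet s) (hsK : s ⊆ K)
    (hg : ContinuousOn g K) (hdet : ∀ y ∈ K, (g y).det ≠ 0)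
    (hS : ∀ y ∈ s, (S y).IsSymm ∧ S y * S y = g y)
    (hM : ContinuousOn M K) (hN : ContinuousOn N K) :
    IntegrableOn (fun y => √(g y).det *
      frob ((S y)⁻¹ * M y * (S y)⁻¹) ((S y)⁻¹ * N y * (S y)⁻¹)) s μ :=
  ((integrableOn_sqrt_det_mul_frob hK hg hdet hM hN).mono_set hsK).congr_fun
    (fun y hy => by
      simp only [frob_conj_sqrt_inv (hS y hy).1 (hS y hy).2]) hs

end Integrability

section FirstFundamentalForm

variable (ψ : (Fin 2 → ℝ) → (Fin 3 → ℝ)) (x : Fin 2 → ℝ)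

lemma met_apply (i j : Fin 2) : met ψ x i j = pd ψ i x ⬝ᵥ pd ψ j x := rfl

lemma det_met : (met ψ x).det = crossPsi ψ x ⬝ᵥ crossPsi ψ x := by
  rw [Matrix.det_fin_two, crossPsi, cross_dot_cross]
  rfl

variable {ψ x}

lemma det_met_ne_zero_iff : (met ψ x).det ≠ 0 ↔ crossPsi ψ x ≠ 0 := by
  rw [det_met, Ne, dotProduct_self_eq_zero]

lemma crossPsi_ne_zero_of_met_eq {φ : (Fin 2 → ℝ) → (Fin 3 → ℝ)} (hmet : met φ x = met ψ x)
    (hx : crossPsi ψ x ≠ 0) : crossPsi φ x ≠ 0 := by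
  rwa [← det_met_ne_zero_iff, hmet, det_met_ne_zero_iff]

lemma sq_norm3 (u : Fin 3 → ℝ) : norm3 u ^ 2 = u ⬝ᵥ u :=
  Real.sq_sqrt (Finset.sum_nonneg fun _ _ => mul_self_nonneg _)

lemma norm3_ne_zero {u : Fin 3 → ℝ} (hu : u ≠ 0) : norm3 u ≠ 0 := by
  rwa [← pow_ne_zero_iff two_ne_zero, sq_norm3, Ne, dotProduct_self_eq_zero]

end FirstFundamentalForm

section GaussFormula

/-- The Christoffel symbols of the first kind `Γ_{ij,k} = ∂ᵢ∂ⱼψ · ∂ₖψ`, as a vector in `k`. They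
are the tangential components of `∂ᵢ∂ⱼψ`. -/
def christoffel (ψ : (Fin 2 → ℝ) → (Fin 3 → ℝ)) (i j : Fin 2) (x : Fin 2 → ℝ) : Fin 2 → ℝ :=
  pd2 ψ i j x ᵥ* jac ψ x

-- The identity is the expansion of the mixed Gram determinant
-- `det ([p, J₁, J₂]ᵀ [q, J₁, J₂]) = det [p, J₁, J₂] * det [q, J₁, J₂]` along `p` and `q`.
lemma det_gram_mul_dotProduct {R : Type*} [CommRing R] (J : Matrix (Fin 3) (Fin 2) R)
    (p q : Fin 3 → R) :
    (Jᵀ * J).det * (p ⬝ᵥ q) =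
      (p ⬝ᵥ crossProduct (J.col 0) (J.col 1)) * (q ⬝ᵥ crossProduct (J.col 0) (J.col 1)) +
        (p ᵥ* J) ⬝ᵥ ((Jᵀ * J).adjugate *ᵥ (q ᵥ* J)) := by
  simp only [Matrix.det_fin_two, Matrix.adjugate_fin_two, cross_apply, dotProduct, Matrix.vecMul,
    Matrix.mulVec, Matrix.mul_apply, Matrix.transpose_apply, Matrix.col_apply, Fin.sum_univ_two,
    Fin.sum_univ_three, Matrix.of_apply, Matrix.cons_val]
  ring

variable {ψ : (Fin 2 → ℝ) → (Fin 3 → ℝ)} {x : Fin 2 → ℝ}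

lemma dotProduct_eq_normal_add_tangential (hx : crossPsi ψ x ≠ 0) (p q : Fin 3 → ℝ) :
    p ⬝ᵥ q = (p ⬝ᵥ nrm ψ x) * (q ⬝ᵥ nrm ψ x) +
      (p ᵥ* jac ψ x) ⬝ᵥ ((met ψ x)⁻¹ *ᵥ (q ᵥ* jac ψ x)) := by
  have hdet : (met ψ x).det ≠ 0 := det_met_ne_zero_iff.mpr hx
  have hnorm : norm3 (crossPsi ψ x) ^ 2 = (met ψ x).det := by rw [sq_norm3, det_met]
  have hgram : (met ψ x).det * (p ⬝ᵥ q) = (p ⬝ᵥ crossPsi ψ x) * (q ⬝ᵥ crossPsi ψ x) +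
      (p ᵥ* jac ψ x) ⬝ᵥ ((met ψ x).adjugate *ᵥ (q ᵥ* jac ψ x)) :=
    det_gram_mul_dotProduct (jac ψ x) p q
  apply mul_left_cancel₀ hdet
  rw [hgram]
  simp only [nrm, Matrix.inv_def, Ring.inverse_eq_inv', Matrix.smul_mulVec, dotProduct_smul,
    smul_eq_mul, mul_add, mul_inv_cancel_left₀ hdet]
  rw [← hnorm]
  field_simp [norm3_ne_zero hx]

lemma pd2_dotProduct_pd2 (hx : crossPsi ψ x ≠ 0) (i j k l : Fin 2) :
    pd2 ψ i j x ⬝ᵥ pd2 ψ k l x = sff ψ x i j * sff ψ x k l +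
      christoffel ψ i j x ⬝ᵥ ((met ψ x)⁻¹ *ᵥ christoffel ψ k l x) :=
  dotProduct_eq_normal_add_tangential hx _ _

lemma sum_frob_hess (hx : crossPsi ψ x ≠ 0) (P Q : Matrix (Fin 2) (Fin 2) ℝ) :
    ∑ m, frob (hess ψ m x) (P * hess ψ m x * Q) =
      frob (sff ψ x) (P * sff ψ x * Q) + ∑ i, ∑ j, ∑ k, ∑ l, P i k * Q l j *
        (christoffel ψ i j x ⬝ᵥ ((met ψ x)⁻¹ *ᵥ christoffel ψ k l x)) := by
  have hsum : ∑ m, frob (hess ψ m x) (P * hess ψ m x * Q) =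
      ∑ i, ∑ j, ∑ k, ∑ l, P i k * Q l j * (pd2 ψ i j x ⬝ᵥ pd2 ψ k l x) := by
    simp only [frob_mul_mul, dotProduct, Fin.sum_univ_three, mul_add, Finset.sum_add_distrib]
    rfl
  rw [hsum, frob_mul_mul]
  simp only [pd2_dotProduct_pd2 hx, mul_add, Finset.sum_add_distrib]

end GaussFormula

section Regularity

variable {ψ : (Fin 2 → ℝ) → (Fin 3 → ℝ)} {x : Fin 2 → ℝ}

lemma contDiffAt_pd {m n : WithTop ℕ∞} (hψ : ContDiffAt ℝ n ψ x) (hmn : m + 1 ≤ n) (i : Fin 2) :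
    ContDiffAt ℝ m (pd ψ i) x :=
  (hψ.fderiv_right hmn).clm_apply contDiffAt_const

lemma continuousAt_pd (hψ : ContDiffAt ℝ 1 ψ x) (i : Fin 2) : ContinuousAt (pd ψ i) x :=
  (contDiffAt_pd (m := 0) hψ (zero_add 1).le i).continuousAt

lemma differentiableAt_pd (hψ : ContDiffAt ℝ 2 ψ x) (i : Fin 2) :
    DifferentiableAt ℝ (pd ψ i) x :=
  (contDiffAt_pd hψ one_add_one_eq_two.le i).differentiableAt one_ne_zero

lemma continuousAt_pd2 (hψ : ContDiffAt ℝ 2 ψ x) (i j : Fin 2) : ContinuousAt (pd2 ψ i j) x :=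
  continuousAt_pd (contDiffAt_pd hψ one_add_one_eq_two.le j) i

lemma continuousAt_dotProduct {X ι : Type*} [TopologicalSpace X] [Fintype ι] {u v : X → ι → ℝ}
    {x : X} (hu : ContinuousAt u x) (hv : ContinuousAt v x) :
    ContinuousAt (fun y => u y ⬝ᵥ v y) x :=
  (continuous_fst.dotProduct continuous_snd).continuousAt.comp (hu.prodMk hv)

lemma continuousAt_met (hψ : ContDiffAt ℝ 1 ψ x) : ContinuousAt (met ψ) x := by
  refine continuousAt_pi.mpr fun i => continuousAt_pi.mpr fun j => ?_
  simp only [met_apply]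
  exact continuousAt_dotProduct (continuousAt_pd hψ i) (continuousAt_pd hψ j)

lemma continuousAt_hess (hψ : ContDiffAt ℝ 2 ψ x) (m : Fin 3) : ContinuousAt (hess ψ m) x :=
  continuousAt_pi.mpr fun i => continuousAt_pi.mpr fun j =>
    continuousAt_pi.mp (continuousAt_pd2 hψ i j) m

lemma continuousAt_crossPsi (hψ : ContDiffAt ℝ 1 ψ x) : ContinuousAt (crossPsi ψ) x :=
  (crossProduct (R := ℝ)).toContinuousBilinearMap.continuous₂.continuousAt.comp
    (f := fun y => (pd ψ 0 y, pd ψ 1 y)) ((continuousAt_pd hψ 0).prodMk (continuousAt_pd hψ 1))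

lemma continuousAt_nrm (hψ : ContDiffAt ℝ 1 ψ x) (hx : crossPsi ψ x ≠ 0) :
    ContinuousAt (nrm ψ) x := by
  have hcross := continuousAt_crossPsi hψ
  have hnorm : ContinuousAt (fun y => norm3 (crossPsi ψ y)) x :=
    (continuousAt_dotProduct hcross hcross).sqrt
  exact (hnorm.inv₀ (norm3_ne_zero hx)).smul hcross

lemma continuousAt_sff (hψ : ContDiffAt ℝ 2 ψ x) (hx : crossPsi ψ x ≠ 0) :
    ContinuousAt (sff ψ) x := by
  refine continuousAt_pi.mpr fun i => continuousAt_pi.mpr fun j => ?_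
  exact continuousAt_dotProduct (continuousAt_pd2 hψ i j)
    (continuousAt_nrm (hψ.of_le one_le_two) hx)

end Regularity

section Koszul

lemma fderiv_dotProduct_apply {E ι : Type*} [NormedAddCommGroup E] [NormedSpace ℝ E] [Fintype ι]
    {u v : E → ι → ℝ} {x : E} (hu : DifferentiableAt ℝ u x) (hv : DifferentiableAt ℝ v x) (w : E) :
    fderiv ℝ (fun y => u y ⬝ᵥ v y) x w = fderiv ℝ u x w ⬝ᵥ v x + u x ⬝ᵥ fderiv ℝ v x w := by
  have hprod := HasFDerivAt.fun_sum (u := Finset.univ) fun m _ =>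
    (hasFDerivAt_pi'.mp hu.hasFDerivAt m).fun_mul (hasFDerivAt_pi'.mp hv.hasFDerivAt m)
  simp only [dotProduct]
  rw [hprod.fderiv]
  simp [Finset.sum_add_distrib, add_comm, mul_comm]

variable {ψ : (Fin 2 → ℝ) → (Fin 3 → ℝ)} {x : Fin 2 → ℝ}

lemma pd2_comm (hψ : ContDiffAt ℝ 2 ψ x) (i j : Fin 2) : pd2 ψ i j x = pd2 ψ j i x := by
  have hdiff : DifferentiableAt ℝ (fderiv ℝ ψ) x :=
    (hψ.fderiv_right one_add_one_eq_two.le).differentiableAt one_ne_zero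
  have hpd2 (i j : Fin 2) :
      pd2 ψ i j x = fderiv ℝ (fderiv ℝ ψ) x (Pi.single i 1) (Pi.single j 1) := by
    change fderiv ℝ (fun y => fderiv ℝ ψ y (Pi.single j 1)) x (Pi.single i 1) = _
    simp [fderiv_clm_apply hdiff (differentiableAt_const _)]
  rw [hpd2, hpd2]
  exact hψ.isSymmSndFDerivAt (by simp) _ _

lemma christoffel_comm (hψ : ContDiffAt ℝ 2 ψ x) (i j : Fin 2) :
    christoffel ψ i j x = christoffel ψ j i x := by
  rw [christoffel, pd2_comm hψ, christoffel]

lemma fderiv_met_single (hψ : ContDiffAt ℝ 2 ψ x) (i j k : Fin 2) :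
    fderiv ℝ (fun y => met ψ y i j) x (Pi.single k 1) =
      christoffel ψ k i x j + christoffel ψ k j x i := by
  simp only [met_apply]
  rw [fderiv_dotProduct_apply (differentiableAt_pd hψ i) (differentiableAt_pd hψ j),
    dotProduct_comm (pd ψ i x)]
  rfl

lemma two_mul_christoffel (hψ : ContDiffAt ℝ 2 ψ x) (i j k : Fin 2) :
    2 * christoffel ψ i j x k =
      fderiv ℝ (fun y => met ψ y j k) x (Pi.single i 1) +
        fderiv ℝ (fun y => met ψ y i k) x (Pi.single j 1) -
        fderiv ℝ (fun y => met ψ y i j) x (Pi.single k 1) := by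
  simp only [fderiv_met_single hψ, christoffel_comm hψ j i, christoffel_comm hψ k]
  ring

lemma christoffel_eq_of_met_eventuallyEq {φ : (Fin 2 → ℝ) → (Fin 3 → ℝ)} (hφ : ContDiffAt ℝ 2 φ x)
    (hψ : ContDiffAt ℝ 2 ψ x) (hmet : met φ =ᶠ[𝓝 x] met ψ) (i j : Fin 2) :
    christoffel φ i j x = christoffel ψ i j x := by
  have hfderiv (i j : Fin 2) :
      fderiv ℝ (fun y => met φ y i j) x = fderiv ℝ (fun y => met ψ y i j) x :=
    (hmet.fun_comp fun g => g i j).fderiv_eq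
  ext k
  apply mul_left_cancel₀ (two_ne_zero' ℝ)
  simp only [two_mul_christoffel hφ, two_mul_christoffel hψ, hfderiv]

end Koszul

section Closure

variable {φ ψ : (Fin 2 → ℝ) → (Fin 3 → ℝ)} {s : Set (Fin 2 → ℝ)}

lemma crossPsi_ne_zero_of_eqOn_met (hφ : ∀ y ∈ closure s, ContDiffAt ℝ 1 φ y)
    (hψ : ∀ y ∈ closure s, ContDiffAt ℝ 1 ψ y) (hmet : Set.EqOn (met φ) (met ψ) s)
    (hcψ : ∀ y ∈ closure s, crossPsi ψ y ≠ 0) : ∀ y ∈ closure s, crossPsi φ y ≠ 0 := by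
  have hmet_closure : Set.EqOn (met φ) (met ψ) (closure s) :=
    hmet.of_subset_closure (fun y hy => (continuousAt_met (hφ y hy)).continuousWithinAt)
      (fun y hy => (continuousAt_met (hψ y hy)).continuousWithinAt) subset_closure subset_rfl
  exact fun y hy => crossPsi_ne_zero_of_met_eq (hmet_closure hy) (hcψ y hy)

end Closure

section EnergyDensity

variable {ψA ψB : (Fin 2 → ℝ) → (Fin 3 → ℝ)} {x : Fin 2 → ℝ}

lemma sum_frob_hess_sub_frob_sff_eq (hA : ContDiffAt ℝ 2 ψA x) (hB : ContDiffAt ℝ 2 ψB x)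
    (hx : crossPsi ψA x ≠ 0) (hmet : met ψB =ᶠ[𝓝 x] met ψA) (P Q : Matrix (Fin 2) (Fin 2) ℝ) :
    ∑ m, frob (hess ψB m x) (P * hess ψB m x * Q) - frob (sff ψB x) (P * sff ψB x * Q) =
      ∑ m, frob (hess ψA m x) (P * hess ψA m x * Q) - frob (sff ψA x) (P * sff ψA x * Q) := by
  rw [sum_frob_hess hx, sum_frob_hess (crossPsi_ne_zero_of_met_eq hmet.eq_of_nhds hx)]
  simp only [christoffel_eq_of_met_eventuallyEq hB hA hmet, hmet.eq_of_nhds, add_sub_cancel_left]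

/-- The density `√(det g) (∑ₘ |S⁻¹ D²ψᵐ S⁻¹|² - 2 II[ψ] : (g⁻¹ II[ψA] g⁻¹))` of the transformed
bending energy of `ψ` relative to `ψA`, where `g = g[ψA]` and `S` stands for the field of its square
roots. Its negative at `ψ = ψA` is the density `√(det g) C_A`. -/
def transformedDensity (S : (Fin 2 → ℝ) → Matrix (Fin 2) (Fin 2) ℝ)
    (ψA ψ : (Fin 2 → ℝ) → (Fin 3 → ℝ)) (y : Fin 2 → ℝ) : ℝ :=
  √(met ψA y).det *
    ((∑ m, frob ((S y)⁻¹ * hess ψ m y * (S y)⁻¹) ((S y)⁻¹ * hess ψ m y * (S y)⁻¹)) -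
      2 * frob (sff ψ y) ((met ψA y)⁻¹ * sff ψA y * (met ψA y)⁻¹))

variable {S : (Fin 2 → ℝ) → Matrix (Fin 2) (Fin 2) ℝ}

lemma neg_transformedDensity_self (hS : (S x).IsSymm) (hSmet : S x * S x = met ψA x) :
    -transformedDensity S ψA ψA x = √(met ψA x).det *
      (2 * frob ((S x)⁻¹ * sff ψA x * (S x)⁻¹) ((S x)⁻¹ * sff ψA x * (S x)⁻¹) -
        ∑ m, frob ((S x)⁻¹ * hess ψA m x * (S x)⁻¹) ((S x)⁻¹ * hess ψA m x * (S x)⁻¹)) := by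
  rw [transformedDensity, frob_conj_sqrt_inv hS hSmet (sff ψA x), ← mul_neg, neg_sub]

lemma sqrt_det_mul_frob_sff_sub_sff (hA : ContDiffAt ℝ 2 ψA x) (hB : ContDiffAt ℝ 2 ψB x)
    (hx : crossPsi ψA x ≠ 0) (hmet : met ψB =ᶠ[𝓝 x] met ψA)
    (hS : (S x).IsSymm) (hSmet : S x * S x = met ψA x) :
    √(met ψA x).det * frob ((S x)⁻¹ * (sff ψB x - sff ψA x) * (S x)⁻¹)
        ((S x)⁻¹ * (sff ψB x - sff ψA x) * (S x)⁻¹) =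
      transformedDensity S ψA ψB x - transformedDensity S ψA ψA x := by
  rw [transformedDensity, transformedDensity, ← mul_sub, Matrix.mul_sub, Matrix.sub_mul,
    frob_sub_sub_self]
  simp only [frob_conj_sqrt_inv hS hSmet]
  congr 1
  linarith [sum_frob_hess_sub_frob_sff_eq hA hB hx hmet (met ψA x)⁻¹ (met ψA x)⁻¹]

variable {K s : Set (Fin 2 → ℝ)} {μ : Measure (Fin 2 → ℝ)} [IsFiniteMeasureOnCompacts μ]

lemma integrableOn_transformedDensity (hK : IsCompact K) (hs : MeasurableSet s) (hsK : s ⊆ K)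
    (hA : ∀ y ∈ K, ContDiffAt ℝ 2 ψA y) (hB : ∀ y ∈ K, ContDiffAt ℝ 2 ψB y)
    (hcA : ∀ y ∈ K, crossPsi ψA y ≠ 0) (hcB : ∀ y ∈ K, crossPsi ψB y ≠ 0)
    (hS : ∀ y ∈ s, (S y).IsSymm ∧ S y * S y = met ψA y) :
    IntegrableOn (transformedDensity S ψA ψB) s μ := by
  have hg : ContinuousOn (met ψA) K := fun y hy =>
    (continuousAt_met ((hA y hy).of_le one_le_two)).continuousWithinAt
  have hdet : ∀ y ∈ K, (met ψA y).det ≠ 0 := fun y hy => det_met_ne_zero_iff.mpr (hcA y hy)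
  have hsffA : ContinuousOn (sff ψA) K := fun y hy =>
    (continuousAt_sff (hA y hy) (hcA y hy)).continuousWithinAt
  have hsffB : ContinuousOn (sff ψB) K := fun y hy =>
    (continuousAt_sff (hB y hy) (hcB y hy)).continuousWithinAt
  have hhess (m : Fin 3) : ContinuousOn (hess ψB m) K := fun y hy =>
    (continuousAt_hess (hB y hy) m).continuousWithinAt
  have hsum : IntegrableOn (fun y => ∑ m, √(met ψA y).det *
      frob ((S y)⁻¹ * hess ψB m y * (S y)⁻¹) ((S y)⁻¹ * hess ψB m y * (S y)⁻¹)) s μ :=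
    integrable_finsetSum _ fun m _ =>
      integrableOn_sqrt_det_mul_frob_conj hK hs hsK hg hdet hS (hhess m) (hhess m)
  have hmixed : IntegrableOn (fun y => √(met ψA y).det *
      frob (sff ψB y) ((met ψA y)⁻¹ * sff ψA y * (met ψA y)⁻¹)) s μ :=
    (integrableOn_sqrt_det_mul_frob hK hg hdet hsffB hsffA).mono_set hsK
  unfold transformedDensity
  simp only [mul_sub, Finset.mul_sum, mul_left_comm _ (2 : ℝ)]
  exact hsum.sub (hmixed.const_mul 2)

end EnergyDensity

/-- transformation of the total free energy, integral form.
Here `S y` is the unique positive definite square root of `g_A(y) = g[ψ_A](y)`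
at each `y ∈ ω`, so `(S y)⁻¹ = g_A^{-1/2}(y)`. -/
theorem transformed_total_free_energy
    (ω U : Set (Fin 2 → ℝ)) (hωo : IsOpen ω) (hωb : Bornology.IsBounded ω)
    (hU : IsOpen U) (hcl : closure ω ⊆ U)
    (ψA ψB : (Fin 2 → ℝ) → (Fin 3 → ℝ))
    (hA : ContDiffOn ℝ 2 ψA U) (hB : ContDiffOn ℝ 2 ψB U)
    (hcA : ∀ y ∈ closure ω, crossPsi ψA y ≠ 0)
    (hmet : ∀ y ∈ ω, met ψB y = met ψA y)
    (f : (Fin 2 → ℝ) → (Fin 3 → ℝ)) (hf : IntegrableOn f ω)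
    (α : ℝ) (hα : 0 < α)
    (S : (Fin 2 → ℝ) → Matrix (Fin 2) (Fin 2) ℝ)
    (hS : ∀ y ∈ ω, (S y).PosDef ∧ S y * S y = met ψA y) :
    (α / 2) * (∫ y in ω, Real.sqrt (met ψA y).det *
        frob ((S y)⁻¹ * (sff ψB y - sff ψA y) * (S y)⁻¹)
             ((S y)⁻¹ * (sff ψB y - sff ψA y) * (S y)⁻¹))
      - ∫ y in ω, Real.sqrt (met ψA y).det * dot3 (f y) (ψB y)
    = (α / 2) * (∫ y in ω, Real.sqrt (met ψA y).det *
          ((∑ m, frob ((S y)⁻¹ * hess ψB m y * (S y)⁻¹)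
                      ((S y)⁻¹ * hess ψB m y * (S y)⁻¹))
            - 2 * frob (sff ψB y) ((met ψA y)⁻¹ * sff ψA y * (met ψA y)⁻¹)))
      - (∫ y in ω, Real.sqrt (met ψA y).det * dot3 (f y) (ψB y))
      + (α / 2) * (∫ y in ω, Real.sqrt (met ψA y).det *
          (2 * frob ((S y)⁻¹ * sff ψA y * (S y)⁻¹)
                    ((S y)⁻¹ * sff ψA y * (S y)⁻¹)
            - ∑ m, frob ((S y)⁻¹ * hess ψA m y * (S y)⁻¹)
                        ((S y)⁻¹ * hess ψA m y * (S y)⁻¹))) := by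
  have hA' : ∀ y ∈ closure ω, ContDiffAt ℝ 2 ψA y :=
    fun y hy => hA.contDiffAt (hU.mem_nhds (hcl hy))
  have hB' : ∀ y ∈ closure ω, ContDiffAt ℝ 2 ψB y :=
    fun y hy => hB.contDiffAt (hU.mem_nhds (hcl hy))
  have hcB : ∀ y ∈ closure ω, crossPsi ψB y ≠ 0 :=
    crossPsi_ne_zero_of_eqOn_met (fun y hy => (hB' y hy).of_le one_le_two)
      (fun y hy => (hA' y hy).of_le one_le_two) hmet hcA
  have hS' : ∀ y ∈ ω, (S y).IsSymm ∧ S y * S y = met ψA y :=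
    fun y hy => ⟨isHermitian_iff_isSymm.mp (hS y hy).1.isHermitian, (hS y hy).2⟩
  have hbending := setIntegral_congr_fun (μ := volume) hωo.measurableSet fun y hy =>
    sqrt_det_mul_frob_sff_sub_sff (hA' y (subset_closure hy)) (hB' y (subset_closure hy))
      (hcA y (subset_closure hy)) (eventually_of_mem (hωo.mem_nhds hy) hmet)
      (hS' y hy).1 (hS' y hy).2
  have hconst := setIntegral_congr_fun (μ := volume) hωo.measurableSet fun y hy =>
    neg_transformedDensity_self (hS' y hy).1 (hS' y hy).2
  have hintA : IntegrableOn (transformedDensity S ψA ψA) ω :=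
    integrableOn_transformedDensity hωb.isCompact_closure hωo.measurableSet subset_closure
      hA' hA' hcA hcA hS'
  have hintB : IntegrableOn (transformedDensity S ψA ψB) ω :=
    integrableOn_transformedDensity hωb.isCompact_closure hωo.measurableSet subset_closure
      hA' hB' hcA hcB hS'
  rw [hbending, ← hconst, integral_sub hintB hintA, integral_neg]
  simp only [transformedDensity]
  ring

end
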